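/- For the classical Hartogs triangle ℍ = {(z₁,z₂) ∈ ℂ² : |z₁| < |z₂| < 1}, the normalized Bergman kernels k_w = K(·,w)/√K(w,w) do NOT converge weakly to 0 in A²(ℍ) as w → ∂ℍ. Specifically, with g(z) = 1/z₂ ∈ A²(ℍ) and w_j = (1/j², 1/j), the pairing ⟨k_{w_j}, g⟩ = 1/(|w_{j,2}|·...) equals 1/((1/j)·√K(w_j,w_j)) up to modulus, and this does not tend to 0 as j → ∞. -/

import Mathlib

open Complex ComplexConjugate MeasureTheory Filter

/-- The classical Hartogs triangle `ℍ = {(z₁,z₂) : |z₁| < |z₂| < 1}`. -/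
def hartogsTriangle : Set (ℂ × ℂ) :=
  {z | ‖z.1‖ < ‖z.2‖ ∧ ‖z.2‖ < 1}

/-- The Bergman kernel of `ℍ`. -/
noncomputable def bergmanH (z w : ℂ × ℂ) : ℂ :=
  z.2 * conj w.2 /
    ((Real.pi : ℂ) ^ 2 * (1 - z.2 * conj w.2) ^ 2 * (z.2 * conj w.2 - z.1 * conj w.1) ^ 2)

/-- The sequence `w_j = (1/j², 1/j) → (0,0) ∈ ∂ℍ`. -/
noncomputable def wseq (j : ℕ) : ℂ × ℂ := (1 / (j : ℂ) ^ 2, 1 / (j : ℂ))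

/-
The biholomorphism `(u, v) ↦ (u v, v)` from the product of the disc and the punctured disc onto `ℍ`
has real Jacobian `|v|²`, and it pulls `K(·, w) · conj g` back to a product of a function of `u` and
a function of `v`. Each factor extends holomorphically to the whole disc, so its area integral is
given by the mean value property; this yields `∫ K(z, w) conj g(z) dV(z) = 1 / conj w₂`. On the
diagonal, `K(w, w)` is the square of `|w₂| / (π (1 - |w₂|²) (|w₂|² - |w₁|²))`, so the pairing has
modulus `π (1 - |w₂|²) (1 - |w₁/w₂|²)`, which tends to `π` whenever `w₂` and `w₁/w₂` tend to `0`.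
-/

open Metric Set Topology
open scoped Real

section CircleAverage

variable {E : Type*} [NormedAddCommGroup E] [NormedSpace ℝ E]

theorem integrableOn_smul_comp_polarCoord_symm {f : ℂ → E} :
    IntegrableOn (fun p : ℝ × ℝ => p.1 • f (Complex.polarCoord.symm p)) polarCoord.target ↔
      Integrable f := by
  have hjac := integrableOn_image_iff_integrableOn_abs_det_fderiv_smul volume
    polarCoord.open_target.measurableSet
    (fun p _ => (hasFDerivAt_polarCoord_symm p).hasFDerivWithinAt) polarCoord.symm.injOn
    (f ∘ measurableEquivRealProd.symm)
  rw [polarCoord.symm_image_target_eq_source,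
    integrableOn_congr_set_ae polarCoord_source_ae_eq_univ, integrableOn_univ,
    volume_preserving_equiv_real_prod.symm.integrable_comp_emb
      measurableEquivRealProd.symm.measurableEmbedding] at hjac
  rw [hjac]
  refine integrableOn_congr_fun (fun p hp => ?_) polarCoord.open_target.measurableSet
  have hp₀ : 0 < p.1 := hp.1
  simp only [det_fderivPolarCoordSymm, abs_of_pos hp₀, Function.comp_apply,
    measurableEquivRealProd_symm_polarCoord_symm_apply]

theorem setIntegral_Ioo_comp_circleMap (f : ℂ → E) (c : ℂ) (r : ℝ) :
    ∫ θ in Ioo (-π) π, f (circleMap c r θ) = (2 * π) • Real.circleAverage f c r := by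
  rw [Real.circleAverage_eq_integral_add (-π), smul_inv_smul₀ Real.two_pi_pos.ne',
    intervalIntegral.integral_comp_add_right (fun θ => f (circleMap c r θ)) (-π),
    intervalIntegral.integral_of_le (by linarith [Real.pi_pos]), integral_Ioc_eq_integral_Ioo]
  congr! 3 <;> ring

theorem integral_eq_setIntegral_circleAverage {f : ℂ → E} (hf : Integrable f) (c : ℂ) :
    ∫ z, f z = ∫ r in Ioi (0 : ℝ), (2 * π * r) • Real.circleAverage f c r := by
  have hpolar : ∀ r θ : ℝ, Complex.polarCoord.symm (r, θ) + c = circleMap c r θ := fun r θ => by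
    rw [Complex.polarCoord_symm_apply, circleMap, exp_mul_I, add_comm]
    push_cast
    rfl
  have hint := integrableOn_smul_comp_polarCoord_symm.2 (hf.comp_add_right c)
  rw [← integral_add_right_eq_self f c, ← Complex.integral_comp_polarCoord_symm, polarCoord_target,
    Measure.volume_eq_prod, setIntegral_prod _ hint]
  refine integral_congr_ae (.of_forall fun r => ?_)
  simp only [hpolar, integral_smul, setIntegral_Ioo_comp_circleMap, smul_smul, mul_comm r]

theorem setIntegral_ball_eq_setIntegral_circleAverage {f : ℂ → E} {c : ℂ} {R : ℝ}
    (hf : IntegrableOn f (ball c R)) :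
    ∫ z in ball c R, f z = ∫ r in Ioo 0 R, (2 * π * r) • Real.circleAverage f c r := by
  rw [← integral_indicator measurableSet_ball, integral_eq_setIntegral_circleAverage
    (hf.integrable_indicator measurableSet_ball) c, ← Ioi_inter_Iio,
    ← setIntegral_indicator measurableSet_Iio]
  refine setIntegral_congr_fun measurableSet_Ioi fun r (hr : 0 < r) => ?_
  have hsphere : ∀ z ∈ sphere c |r|, dist z c = r := fun z hz => by
    rwa [mem_sphere, abs_of_pos hr] at hz
  by_cases hrR : r < R
  · have hEq : EqOn ((ball c R).indicator f) f (sphere c |r|) := fun z hz =>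
      indicator_of_mem (mem_ball.2 ((hsphere z hz).trans_lt hrR)) f
    simp only [indicator_of_mem (mem_Iio.2 hrR), Real.circleAverage_congr_sphere hEq]
  · have hEq : EqOn ((ball c R).indicator f) 0 (sphere c |r|) := fun z hz =>
      indicator_of_notMem (fun hz' => hrR (hsphere z hz ▸ mem_ball.1 hz')) f
    simp [indicator_of_notMem (mem_Iio.not.2 hrR), Real.circleAverage_congr_sphere hEq,
      Real.circleAverage_def]

end CircleAverage

section MeanValue

variable {E : Type*} [NormedAddCommGroup E] [NormedSpace ℂ E] [CompleteSpace E]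

theorem setIntegral_ball_of_diffContOnCl {f : ℂ → E} {c : ℂ} {R : ℝ} (hR : 0 ≤ R)
    (hf : DiffContOnCl ℂ f (ball c R)) :
    ∫ z in ball c R, f z = (π * R ^ 2) • f c := by
  have hint : IntegrableOn f (ball c R) :=
    (hf.continuousOn.integrableOn_compact isBounded_ball.isCompact_closure).mono_set subset_closure
  have hmean : ∀ r ∈ Ioo 0 R, (2 * π * r) • Real.circleAverage f c r = (2 * π * r) • f c :=
    fun r hr => by
      rw [(hf.mono (ball_subset_ball ((abs_of_pos hr.1).trans_le hr.2.le))).circleAverage]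
  rw [setIntegral_ball_eq_setIntegral_circleAverage hint,
    setIntegral_congr_fun measurableSet_Ioo hmean, integral_smul_const,
    ← integral_Ioc_eq_integral_Ioo, ← intervalIntegral.integral_of_le hR,
    intervalIntegral.integral_const_mul, integral_id]
  congr 1
  ring

end MeanValue

theorem sub_mul_ne_zero_of_norm_lt {a b z : ℂ} {R : ℝ} (hab : ‖a‖ * R < ‖b‖) (hz : ‖z‖ ≤ R) :
    b - z * a ≠ 0 := by
  refine sub_ne_zero.2 fun h => hab.not_ge ?_
  rw [h, norm_mul, mul_comm]
  gcongr

theorem setIntegral_ball_inv_sub_mul_pow {a b : ℂ} {R : ℝ} (hR : 0 ≤ R) (hab : ‖a‖ * R < ‖b‖)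
    (n : ℕ) :
    ∫ z in ball (0 : ℂ) R, ((b - z * a) ^ n)⁻¹ = π * R ^ 2 * (b ^ n)⁻¹ := by
  have hdiff : DiffContOnCl ℂ (fun z => ((b - z * a) ^ n)⁻¹) (ball 0 R) := by
    refine DiffContOnCl.inv (Differentiable.diffContOnCl (by fun_prop)) fun z hz => ?_
    exact pow_ne_zero n (sub_mul_ne_zero_of_norm_lt hab
      (mem_closedBall_zero_iff.1 (closure_ball_subset_closedBall hz)))
  rw [setIntegral_ball_of_diffContOnCl hR hdiff, zero_mul, sub_zero, real_smul]
  push_cast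
  rfl

section HolomorphicChangeOfVariables

variable {V : Type*} [NormedAddCommGroup V] [NormedSpace ℂ V]

theorem det_restrictScalars_real_eq_norm_sq (L : V →L[ℂ] V) :
    (L.restrictScalars ℝ).det = ‖L.det‖ ^ 2 := by
  rw [← normSq_eq_norm_sq, ← Algebra.norm_complex_apply]
  exact LinearMap.det_restrictScalars

variable [FiniteDimensional ℂ V] [MeasurableSpace V] [BorelSpace V]
  {E : Type*} [NormedAddCommGroup E] [NormedSpace ℝ E]

theorem integral_image_eq_integral_norm_det_sq_smul (μ : Measure V) [μ.IsAddHaarMeasure]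
    {s : Set V} {f : V → V} {f' : V → V →L[ℂ] V} (hs : MeasurableSet s)
    (hf' : ∀ x ∈ s, HasFDerivWithinAt f (f' x) s x) (hf : InjOn f s) (g : V → E) :
    ∫ x in f '' s, g x ∂μ = ∫ x in s, ‖(f' x).det‖ ^ 2 • g (f x) ∂μ := by
  have : FiniteDimensional ℝ V := .trans ℝ ℂ V
  rw [integral_image_eq_integral_abs_det_fderiv_smul μ hs
    (fun x hx => (hf' x hx).restrictScalars ℝ) hf]
  simp only [det_restrictScalars_real_eq_norm_sq, abs_sq]

end HolomorphicChangeOfVariables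

/-- The product of the unit disc and the punctured unit disc, the parameter domain of the Hartogs
triangle. -/
def hartogsParamSource : Set (ℂ × ℂ) := ball 0 1 ×ˢ (ball 0 1 \ {0})

theorem measurableSet_hartogsParamSource : MeasurableSet hartogsParamSource :=
  measurableSet_ball.prod (measurableSet_ball.diff (measurableSet_singleton 0))

/-- The parametrization `(u, v) ↦ (u v, v)`, a biholomorphism from `hartogsParamSource` onto the
Hartogs triangle. -/
def hartogsParam (p : ℂ × ℂ) : ℂ × ℂ := (p.1 * p.2, p.2)

/-- The complex derivative `(h, k) ↦ (v h + u k, k)` of `hartogsParam` at `(u, v)`. -/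
noncomputable def fderivHartogsParam (p : ℂ × ℂ) : ℂ × ℂ →L[ℂ] ℂ × ℂ :=
  (p.1 • ContinuousLinearMap.snd ℂ ℂ ℂ + p.2 • ContinuousLinearMap.fst ℂ ℂ ℂ).prod
    (ContinuousLinearMap.snd ℂ ℂ ℂ)

theorem hasFDerivAt_hartogsParam (p : ℂ × ℂ) :
    HasFDerivAt hartogsParam (fderivHartogsParam p) p :=
  (hasFDerivAt_fst.mul hasFDerivAt_snd).prodMk hasFDerivAt_snd

theorem det_fderivHartogsParam (p : ℂ × ℂ) : (fderivHartogsParam p).det = p.2 := by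
  rw [ContinuousLinearMap.det, ← LinearMap.det_toMatrix (Module.Basis.finTwoProd ℂ),
    Matrix.det_fin_two]
  simp [LinearMap.toMatrix_apply, fderivHartogsParam]

theorem bijOn_hartogsParam : BijOn hartogsParam hartogsParamSource hartogsTriangle := by
  refine ⟨?_, ?_, ?_⟩
  · rintro ⟨u, v⟩ ⟨hu, hv, hv₀⟩
    rw [mem_ball_zero_iff] at hu hv
    refine ⟨?_, hv⟩
    rw [hartogsParam, norm_mul]
    exact mul_lt_of_lt_one_left (norm_pos_iff.2 hv₀) hu
  · rintro ⟨u, v⟩ ⟨-, -, hv₀⟩ ⟨u', v'⟩ - h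
    obtain ⟨hmul, rfl⟩ := Prod.mk.inj h
    exact Prod.ext (mul_right_cancel₀ hv₀ hmul) rfl
  · rintro ⟨x, y⟩ ⟨hxy, hy⟩
    have hy₀ : 0 < ‖y‖ := (norm_nonneg x).trans_lt hxy
    have hy₀' : y ≠ 0 := norm_pos_iff.1 hy₀
    refine ⟨(x / y, y), ⟨?_, mem_ball_zero_iff.2 hy, hy₀'⟩, Prod.ext (div_mul_cancel₀ x hy₀') rfl⟩
    rw [mem_ball_zero_iff, norm_div]
    exact (div_lt_one hy₀).2 hxy

theorem setIntegral_hartogsTriangle {E : Type*} [NormedAddCommGroup E] [NormedSpace ℝ E]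
    (F : ℂ × ℂ → E) :
    ∫ z in hartogsTriangle, F z = ∫ p in hartogsParamSource, ‖p.2‖ ^ 2 • F (hartogsParam p) := by
  rw [Measure.volume_eq_prod, ← bijOn_hartogsParam.image_eq,
    integral_image_eq_integral_norm_det_sq_smul _ measurableSet_hartogsParamSource
      (fun p _ => (hasFDerivAt_hartogsParam p).hasFDerivWithinAt) bijOn_hartogsParam.injOn]
  simp only [det_fderivHartogsParam]

theorem norm_sq_smul_bergmanH_hartogsParam (w : ℂ × ℂ) {p : ℂ × ℂ} (hp : p.2 ≠ 0) :
    ‖p.2‖ ^ 2 • (bergmanH (hartogsParam p) w * conj ((hartogsParam p).2)⁻¹) =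
      conj w.2 / (π : ℂ) ^ 2 *
        (((conj w.2 - p.1 * conj w.1) ^ 2)⁻¹ * ((1 - p.2 * conj w.2) ^ 2)⁻¹) := by
  have hconj : conj p.2 ≠ 0 := (map_ne_zero _).2 hp
  have hfactor : p.2 * conj w.2 - p.1 * p.2 * conj w.1 = p.2 * (conj w.2 - p.1 * conj w.1) := by
    ring
  rw [real_smul, ofReal_pow, ← mul_conj', bergmanH, hartogsParam, hfactor, map_inv₀]
  field_simp

theorem setIntegral_bergmanH_mul_conj_inv_snd {w : ℂ × ℂ} (hw : w ∈ hartogsTriangle) :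
    ∫ z in hartogsTriangle, bergmanH z w * conj (z.2)⁻¹ = (conj w.2)⁻¹ := by
  obtain ⟨hw₁, hw₂⟩ := hw
  have hfst : ∫ u in ball (0 : ℂ) 1, ((conj w.2 - u * conj w.1) ^ 2)⁻¹ = π * (conj w.2 ^ 2)⁻¹ := by
    simpa using setIntegral_ball_inv_sub_mul_pow (a := conj w.1) (b := conj w.2) zero_le_one
      (by simpa using hw₁) 2
  have hsnd : ∫ v in ball (0 : ℂ) 1 \ {0}, ((1 - v * conj w.2) ^ 2)⁻¹ = (π : ℂ) := by
    rw [setIntegral_congr_set (sdiff_null_ae_eq_self (measure_singleton 0))]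
    simpa using setIntegral_ball_inv_sub_mul_pow (a := conj w.2) (b := 1) zero_le_one
      (by simpa using hw₂) 2
  rw [setIntegral_hartogsTriangle, setIntegral_congr_fun measurableSet_hartogsParamSource
    fun p hp => norm_sq_smul_bergmanH_hartogsParam w hp.2.2, integral_const_mul,
    hartogsParamSource, Measure.volume_eq_prod,
    setIntegral_prod_mul (fun u => ((conj w.2 - u * conj w.1) ^ 2)⁻¹)
      (fun v => ((1 - v * conj w.2) ^ 2)⁻¹), hfst, hsnd]
  have hw₀ : conj w.2 ≠ 0 :=
    (map_ne_zero _).2 (norm_pos_iff.1 ((norm_nonneg w.1).trans_lt hw₁))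
  field_simp

theorem bergmanH_self (w : ℂ × ℂ) :
    bergmanH w w =
      ((‖w.2‖ / (π * (1 - ‖w.2‖ ^ 2) * (‖w.2‖ ^ 2 - ‖w.1‖ ^ 2))) ^ 2 : ℝ) := by
  simp only [bergmanH, mul_conj']
  push_cast
  rw [div_pow, mul_pow, mul_pow]

theorem one_div_norm_snd_mul_sqrt_bergmanH_self {w : ℂ × ℂ} (hw : w ∈ hartogsTriangle) :
    1 / (‖w.2‖ * √(bergmanH w w).re) = π * (1 - ‖w.2‖ ^ 2) * (1 - (‖w.1‖ / ‖w.2‖) ^ 2) := by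
  obtain ⟨hw₁, hw₂⟩ := hw
  have hw₀ : 0 < ‖w.2‖ := (norm_nonneg w.1).trans_lt hw₁
  have hdisc : 0 < 1 - ‖w.2‖ ^ 2 := by nlinarith
  have hcone : 0 < ‖w.2‖ ^ 2 - ‖w.1‖ ^ 2 := by nlinarith [norm_nonneg w.1]
  rw [bergmanH_self, ofReal_re, Real.sqrt_sq (by positivity)]
  field_simp

theorem tendsto_one_div_norm_snd_mul_sqrt_bergmanH_self {ι : Type*} {l : Filter ι} {w : ι → ℂ × ℂ}
    (hw : ∀ᶠ i in l, w i ∈ hartogsTriangle) (hsnd : Tendsto (fun i => ‖(w i).2‖) l (𝓝 0))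
    (hratio : Tendsto (fun i => ‖(w i).1‖ / ‖(w i).2‖) l (𝓝 0)) :
    Tendsto (fun i => 1 / (‖(w i).2‖ * √(bergmanH (w i) (w i)).re)) l (𝓝 π) := by
  have hlim : Tendsto (fun i => π * (1 - ‖(w i).2‖ ^ 2) * (1 - (‖(w i).1‖ / ‖(w i).2‖) ^ 2)) l
      (𝓝 π) := by
    simpa using ((hsnd.pow 2).const_sub 1).const_mul π |>.mul ((hratio.pow 2).const_sub 1)
  refine hlim.congr' ?_
  filter_upwards [hw] with i hi using (one_div_norm_snd_mul_sqrt_bergmanH_self hi).symm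

theorem norm_wseq_snd (j : ℕ) : ‖(wseq j).2‖ = (j : ℝ)⁻¹ := by
  simp [wseq]

theorem norm_wseq_fst_div_norm_wseq_snd (j : ℕ) : ‖(wseq j).1‖ / ‖(wseq j).2‖ = (j : ℝ)⁻¹ := by
  rcases eq_or_ne j 0 with rfl | hj
  · simp [wseq]
  · simp only [wseq, norm_div, norm_one, norm_pow, norm_natCast]
    field_simp

theorem wseq_mem_hartogsTriangle {j : ℕ} (hj : 2 ≤ j) : wseq j ∈ hartogsTriangle := by
  have hlt : (j : ℝ)⁻¹ < 1 := inv_lt_one_of_one_lt₀ (by exact_mod_cast hj)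
  have hpos : 0 < ‖(wseq j).2‖ := by rw [norm_wseq_snd]; positivity
  refine ⟨(div_lt_one hpos).1 ?_, ?_⟩
  · rwa [norm_wseq_fst_div_norm_wseq_snd]
  · rwa [norm_wseq_snd]

/-- With `g(z) = 1/z₂ ∈ A²(ℍ)`, the pairing `⟨k_w, g⟩` has modulus `1/(|w₂|√K(w,w))`,
and along `w_j = (1/j², 1/j)` this does not tend to `0`; hence the normalized Bergman
kernels do not converge weakly to `0` at the boundary. -/
theorem stmt12 :
    (∀ w ∈ hartogsTriangle,
      ‖∫ z in hartogsTriangle,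
          bergmanH z w / ((Real.sqrt ((bergmanH w w).re) : ℝ) : ℂ) * conj ((z.2)⁻¹)‖ =
        1 / (‖w.2‖ * Real.sqrt ((bergmanH w w).re))) ∧
    ¬ Tendsto
        (fun j : ℕ =>
          1 / (‖(wseq j).2‖ * Real.sqrt ((bergmanH (wseq j) (wseq j)).re)))
        atTop (nhds 0) := by
  refine ⟨fun w hw => ?_, fun hzero => ?_⟩
  · simp_rw [div_mul_eq_mul_div]
    rw [integral_div, setIntegral_bergmanH_mul_conj_inv_snd hw, norm_div, norm_inv,
      RCLike.norm_conj, norm_real, Real.norm_of_nonneg (Real.sqrt_nonneg _), inv_eq_one_div,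
      div_div]
  · have hinv : Tendsto (fun j : ℕ => (j : ℝ)⁻¹) atTop (𝓝 0) := tendsto_inv_atTop_nhds_zero_nat
    have hpi := tendsto_one_div_norm_snd_mul_sqrt_bergmanH_self
      ((eventually_ge_atTop 2).mono fun j hj => wseq_mem_hartogsTriangle hj)
      (by simpa only [norm_wseq_snd] using hinv)
      (by simpa only [norm_wseq_fst_div_norm_wseq_snd] using hinv)
    exact Real.pi_ne_zero (tendsto_nhds_unique hpi hzero)
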